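/- Let $H=\int_X^{\oplus}H(x)\,d\mu(x)$ be a decomposable self-adjoint operator, where $x\mapsto H(x)$ is a measurable field of uniformly bounded self-adjoint operators on a connected compact metric measure space $X$ with $\mu$ of full support, and suppose $x\mapsto H(x)$ is norm-continuous. Then $\sigma(H)=\overline{\bigcup_{x\in X}\sigma(H(x))}$, and moreover, if $\lambda\in\sigma(H(x_0))$ for some $x_0\in X$ with $\mu(\{x_0\})=0$, then $\lambda\in\sigma_{ess}(H)$. -/

import Mathlib

open MeasureTheory

/-- The essential spectrum of a bounded operator: the part of the spectrum
stable under all compact perturbations (Weyl). -/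
noncomputable def essSpectrum {E : Type*} [NormedAddCommGroup E] [NormedSpace ℂ E]
    (H : E →L[ℂ] E) : Set ℂ :=
  ⋂ K ∈ {K : E →L[ℂ] E | IsCompactOperator K}, spectrum ℂ (H + K)

/-!
If `v` is a unit vector with `T x₀ v - c • v` small, strong continuity keeps `T x v - c • v` small
near `x₀`, so the normalized indicators `1_U v` of small neighbourhoods `U` of `x₀` are approximate
eigenvectors of `H`. When `μ {x₀} = 0` the supports can be shrunk to measure zero; the vectors then
converge weakly to zero, hence are sent to vectors converging to zero by every compact operator, and
`c` stays in the spectrum of every compact perturbation of `H`. Conversely, if `c` is at distance at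
least `ε` from all fiber spectra, normality bounds every fiber resolvent by `ε⁻¹`, so `H - c` is
bounded below and, being normal, invertible.
-/

open Filter Topology
open scoped ENNReal InnerProductSpace

section ApproximateEigenvalues

variable {𝕜 E : Type*}

/-- `c` lies in the approximate point spectrum of `A`: unit vectors `v` make `A v - c • v`
arbitrarily small. -/
def IsApproxEigenvalue [NontriviallyNormedField 𝕜] [NormedAddCommGroup E] [NormedSpace 𝕜 E]
    (A : E →L[𝕜] E) (c : 𝕜) : Prop :=
  ∀ ε > 0, ∃ v, ‖v‖ = 1 ∧ ‖A v - c • v‖ ≤ ε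

theorem norm_algebraMap_sub_apply [NontriviallyNormedField 𝕜] [NormedAddCommGroup E]
    [NormedSpace 𝕜 E] (A : E →L[𝕜] E) (c : 𝕜) (v : E) :
    ‖(algebraMap 𝕜 (E →L[𝕜] E) c - A) v‖ = ‖A v - c • v‖ := by
  rw [sub_apply, ContinuousLinearMap.algebraMap_apply, norm_sub_rev]

theorem IsApproxEigenvalue.mem_spectrum [NontriviallyNormedField 𝕜] [NormedAddCommGroup E]
    [NormedSpace 𝕜 E] {A : E →L[𝕜] E} {c : 𝕜} (h : IsApproxEigenvalue A c) :
    c ∈ spectrum 𝕜 A := by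
  intro hunit
  obtain ⟨δ, hδ, hbound⟩ := antilipschitzWith_iff_exists_mul_le_norm.mp
    (ContinuousLinearMap.antilipschitz_of_isEmbedding _
      (ContinuousLinearMap.isHomeomorph_of_isUnit hunit).isEmbedding)
  obtain ⟨v, hv, hle⟩ := h (δ / 2) (half_pos hδ)
  have := hbound v
  rw [norm_algebraMap_sub_apply, hv] at this
  linarith

theorem closure_subset_spectrum_of_isApproxEigenvalue [NontriviallyNormedField 𝕜]
    [NormedAddCommGroup E] [NormedSpace 𝕜 E] [CompleteSpace E] {A : E →L[𝕜] E} {s : Set 𝕜}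
    (hs : ∀ c ∈ s, IsApproxEigenvalue A c) : closure s ⊆ spectrum 𝕜 A :=
  closure_minimal (fun c hc => (hs c hc).mem_spectrum) (spectrum.isClosed A)

theorem norm_apply_sub_smul_normalize_le [RCLike 𝕜] [NormedAddCommGroup E] [NormedSpace 𝕜 E]
    {A : E →L[𝕜] E} {c : 𝕜} {v : E} (hv : v ≠ 0) {ε : ℝ} (h : ‖A v - c • v‖ ≤ ε * ‖v‖) :
    ‖A ((‖v‖⁻¹ : 𝕜) • v) - c • (‖v‖⁻¹ : 𝕜) • v‖ ≤ ε := by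
  rw [map_smul, smul_comm c, ← smul_sub, norm_smul, norm_inv, RCLike.norm_ofReal, abs_norm]
  exact (inv_mul_le_iff₀' (norm_pos_iff.mpr hv)).mpr h

theorem isStarNormal_algebraMap_sub {R A : Type*} [CommRing R] [StarRing R] [Ring A]
    [StarRing A] [Algebra R A] [StarModule R A] (a : A) [IsStarNormal a] (r : R) :
    IsStarNormal (algebraMap R A r - a) where
  star_comm_self := by
    rw [star_sub, ← algebraMap_star_comm]
    exact ((Algebra.commute_algebraMap_left _ _).sub_right
      (Algebra.commute_algebraMap_left _ _)).sub_left
        ((Algebra.commute_algebraMap_right _ _).sub_right IsStarNormal.star_comm_self)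

variable [RCLike 𝕜] [NormedAddCommGroup E] [InnerProductSpace 𝕜 E] [CompleteSpace E]

theorem isUnit_of_isStarNormal_of_antilipschitz {A : E →L[𝕜] E} (hA : IsStarNormal A)
    (hbound : ∃ K, AntilipschitzWith K A) : IsUnit A := by
  rw [ContinuousLinearMap.isUnit_iff_bijective,
    ContinuousLinearMap.bijective_iff_dense_range_and_antilipschitz]
  obtain ⟨K, hK⟩ := hbound
  refine ⟨?_, K, hK⟩
  rw [Submodule.topologicalClosure_eq_top_iff,
    ContinuousLinearMap.IsStarNormal.orthogonal_range hA]
  exact LinearMap.ker_eq_bot.mpr hK.injective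

theorem isApproxEigenvalue_of_mem_spectrum (A : E →L[𝕜] E) [IsStarNormal A] {c : 𝕜}
    (hc : c ∈ spectrum 𝕜 A) : IsApproxEigenvalue A c := by
  by_contra hnot
  obtain ⟨ε, hε, hfar⟩ : ∃ ε > 0, ∀ v, ‖v‖ = 1 → ε < ‖A v - c • v‖ := by
    simpa only [IsApproxEigenvalue, not_forall, not_exists, not_and, not_le, exists_prop] using hnot
  refine hc (isUnit_of_isStarNormal_of_antilipschitz (isStarNormal_algebraMap_sub A c)
    (antilipschitzWith_iff_exists_mul_le_norm.mpr ⟨ε, hε, fun v => ?_⟩))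
  rw [norm_algebraMap_sub_apply]
  by_contra! hlt
  have hv : v ≠ 0 := by
    rintro rfl
    simp at hlt
  exact (hfar _ (norm_smul_inv_norm hv)).not_ge (norm_apply_sub_smul_normalize_le hv hlt.le)

end ApproximateEigenvalues

section NormalResolvent

theorem norm_resolvent_le_inv_of_isStarNormal {A : Type*} [CStarAlgebra A] (a : A)
    [IsStarNormal a] {c : ℂ} {d : ℝ} (hd : 0 < d) (hdist : ∀ z ∈ spectrum ℂ a, d ≤ dist c z) :
    ‖resolvent a c‖ ≤ d⁻¹ := by
  have hne : ∀ z ∈ spectrum ℂ a, c - z ≠ 0 := fun z hz =>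
    sub_ne_zero.mpr (dist_pos.mp (hd.trans_le (hdist z hz)))
  have hcfc : resolvent a c = cfc (fun z => (c - z)⁻¹) a := by
    rw [cfc_inv _ a hne, cfc_sub _ _ a, cfc_const c a, cfc_id' ℂ a, resolvent]
  rw [hcfc]
  refine norm_cfc_le (inv_nonneg.mpr hd.le) fun z hz => ?_
  rw [norm_inv, ← dist_eq_norm]
  exact inv_anti₀ hd (hdist z hz)

theorem norm_le_inv_mul_norm_apply_sub_smul {E : Type*} [NormedAddCommGroup E]
    [InnerProductSpace ℂ E] [CompleteSpace E] (A : E →L[ℂ] E) [IsStarNormal A] {c : ℂ} {d : ℝ}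
    (hd : 0 < d) (hdist : ∀ z ∈ spectrum ℂ A, d ≤ dist c z) (v : E) :
    ‖v‖ ≤ d⁻¹ * ‖A v - c • v‖ := by
  have hc : c ∈ resolventSet ℂ A := by
    by_contra hmem
    exact absurd (hdist c hmem) (by simpa using hd)
  have hinv : resolvent A c ((algebraMap ℂ (E →L[ℂ] E) c - A) v) = v :=
    DFunLike.congr_fun (Ring.inverse_mul_cancel _ hc) v
  calc ‖v‖ = ‖resolvent A c ((algebraMap ℂ (E →L[ℂ] E) c - A) v)‖ := by rw [hinv]
    _ ≤ ‖resolvent A c‖ * ‖A v - c • v‖ := by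
      rw [← norm_algebraMap_sub_apply]
      exact ContinuousLinearMap.le_opNorm _ _
    _ ≤ d⁻¹ * ‖A v - c • v‖ := by
      gcongr
      exact norm_resolvent_le_inv_of_isStarNormal A hd hdist

end NormalResolvent

section WeylSequences

theorem tendsto_zero_of_isCompactOperator {ι 𝕜 E F : Type*} [RCLike 𝕜] [NormedAddCommGroup E]
    [NormedSpace 𝕜 E] [NormedAddCommGroup F] [NormedSpace 𝕜 F] {K : E →L[𝕜] F}
    (hK : IsCompactOperator K) {l : Filter ι} {f : ι → E} {C : ℝ} (hbdd : ∀ i, ‖f i‖ ≤ C)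
    (hweak : ∀ φ : StrongDual 𝕜 E, Tendsto (fun i => φ (f i)) l (𝓝 0)) :
    Tendsto (fun i => K (f i)) l (𝓝 0) := by
  obtain ⟨S, hS, himage⟩ :=
    IsCompactOperator.image_closedBall_subset_compact (f := (K : E →ₗ[𝕜] F)) hK C
  have hmem : ∀ i, K (f i) ∈ S := fun i => himage ⟨f i, by simpa using hbdd i, rfl⟩
  refine hS.tendsto_nhds_of_unique_mapClusterPt (.of_forall hmem) fun y _ hy => ?_
  refine SeparatingDual.eq_zero_of_forall_dual_eq_zero (R := 𝕜) fun φ => ?_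
  have hcluster : MapClusterPt (φ y) l (φ ∘ fun i => K (f i)) :=
    hy.tendsto_comp φ.continuous.continuousAt
  exact eq_of_nhds_neBot (hcluster.clusterPt.mono (hweak (φ ∘L K)))

variable {𝕜 E : Type*} [RCLike 𝕜] [NormedAddCommGroup E] [NormedSpace 𝕜 E]

/-- A singular Weyl sequence for `A` at `c`: unit vectors converging weakly to zero along which
`A - c` tends to zero. -/
structure IsWeylSequence (A : E →L[𝕜] E) (c : 𝕜) (f : ℕ → E) : Prop where
  norm_eq_one : ∀ n, ‖f n‖ = 1
  tendsto_sub_smul : Tendsto (fun n => A (f n) - c • f n) atTop (𝓝 0)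
  tendsto_dual : ∀ φ : StrongDual 𝕜 E, Tendsto (fun n => φ (f n)) atTop (𝓝 0)

namespace IsWeylSequence

theorem isApproxEigenvalue {A : E →L[𝕜] E} {c : 𝕜} {f : ℕ → E} (hf : IsWeylSequence A c f) :
    IsApproxEigenvalue A c := by
  intro ε hε
  obtain ⟨n, hn⟩ := (hf.tendsto_sub_smul.norm.eventually_le_const (by simpa using hε)).exists
  exact ⟨f n, hf.norm_eq_one n, hn⟩

theorem add_isCompactOperator {A K : E →L[𝕜] E} {c : 𝕜} {f : ℕ → E}
    (hf : IsWeylSequence A c f) (hK : IsCompactOperator K) : IsWeylSequence (A + K) c f where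
  norm_eq_one := hf.norm_eq_one
  tendsto_dual := hf.tendsto_dual
  tendsto_sub_smul := by
    have hKf := tendsto_zero_of_isCompactOperator hK (fun n => (hf.norm_eq_one n).le)
      hf.tendsto_dual
    simpa [add_sub_right_comm] using hf.tendsto_sub_smul.add hKf

theorem mem_essSpectrum {E : Type*} [NormedAddCommGroup E] [NormedSpace ℂ E] {A : E →L[ℂ] E}
    {c : ℂ} {f : ℕ → E} (hf : IsWeylSequence A c f) : c ∈ essSpectrum A :=
  Set.mem_iInter₂.mpr fun _ hK => (hf.add_isCompactOperator hK).isApproxEigenvalue.mem_spectrum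

end IsWeylSequence

end WeylSequences

section ShrinkingSupports

variable {ι X 𝕜 E : Type*} [MeasurableSpace X] {μ : Measure X} [NormedAddCommGroup E]

theorem tendsto_eLpNorm_indicator_zero {p : ℝ≥0∞} (hp_one : 1 ≤ p) (hp_top : p ≠ ∞) {g : X → E}
    (hg : MemLp g p μ) {l : Filter ι} {s : ι → Set X} (hs : ∀ i, MeasurableSet (s i))
    (hμs : Tendsto (fun i => μ (s i)) l (𝓝 0)) :
    Tendsto (fun i => eLpNorm ((s i).indicator g) p μ) l (𝓝 0) := by
  refine ENNReal.tendsto_nhds_zero.mpr fun ε hε => ?_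
  obtain ⟨η, -, hηε⟩ := ENNReal.lt_iff_exists_real_btwn.mp hε
  obtain ⟨δ, hδ, hsmall⟩ := hg.eLpNorm_indicator_le hp_one hp_top (ENNReal.ofReal_pos.mp hηε.1)
  filter_upwards [ENNReal.tendsto_nhds_zero.mp hμs _ (ENNReal.ofReal_pos.mpr hδ)] with i hi
  exact (hsmall _ (hs i) hi).trans hηε.2.le

variable [RCLike 𝕜] [InnerProductSpace 𝕜 E]

theorem norm_inner_le_of_ae_eq_zero_notMem {s : Set X} (hs : MeasurableSet s) {f : Lp E 2 μ}
    (hf : ∀ᵐ x ∂μ, x ∉ s → f x = 0) (g : Lp E 2 μ) :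
    ‖⟪g, f⟫_𝕜‖ ≤ (eLpNorm (s.indicator g) 2 μ).toReal * ‖f‖ := by
  have hgs : MemLp (s.indicator g) 2 μ := (Lp.memLp g).indicator hs
  have hinner : ⟪g, f⟫_𝕜 = ⟪hgs.toLp, f⟫_𝕜 := by
    rw [L2.inner_def, L2.inner_def]
    refine integral_congr_ae ?_
    filter_upwards [hf, hgs.coeFn_toLp] with x hfx hgx
    rw [hgx]
    by_cases hx : x ∈ s
    · rw [Set.indicator_of_mem hx]
    · rw [hfx hx, inner_zero_right, inner_zero_right]
  rw [hinner, ← Lp.norm_toLp _ hgs]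
  exact norm_inner_le_norm _ _

theorem tendsto_inner_zero_of_tendsto_measure_zero {l : Filter ι} {f : ι → Lp E 2 μ} {C : ℝ}
    (hbdd : ∀ i, ‖f i‖ ≤ C) {s : ι → Set X} (hs : ∀ i, MeasurableSet (s i))
    (hμs : Tendsto (fun i => μ (s i)) l (𝓝 0)) (hf : ∀ i, ∀ᵐ x ∂μ, x ∉ s i → f i x = 0)
    (g : Lp E 2 μ) : Tendsto (fun i => ⟪g, f i⟫_𝕜) l (𝓝 0) := by
  have hg := tendsto_eLpNorm_indicator_zero one_le_two ENNReal.ofNat_ne_top (Lp.memLp g) hs hμs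
  have hlim : Tendsto (fun i => (eLpNorm ((s i).indicator g) 2 μ).toReal * C) l (𝓝 0) := by
    simpa using ((ENNReal.tendsto_toReal ENNReal.zero_ne_top).comp hg).mul_const C
  refine squeeze_zero_norm (fun i => ?_) hlim
  exact (norm_inner_le_of_ae_eq_zero_notMem (hs i) (hf i) g).trans (by gcongr; exact hbdd i)

end ShrinkingSupports

section DirectIntegral

/-- The operator `H` on `L^p(X, μ; E)` acts fiberwise through the field `T`; for `p = 2` it is the
decomposable operator `∫⊕ T x dμ(x)` on the direct integral of the constant field `E`. -/
def IsDirectIntegral {X 𝕜 E : Type*} [MeasurableSpace X] {μ : Measure X}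
    [NontriviallyNormedField 𝕜] [NormedAddCommGroup E] [NormedSpace 𝕜 E] {p : ℝ≥0∞}
    [Fact (1 ≤ p)] (T : X → E →L[𝕜] E) (H : Lp E p μ →L[𝕜] Lp E p μ) : Prop :=
  ∀ f : Lp E p μ, H f =ᵐ[μ] fun x => T x (f x)

namespace IsDirectIntegral

variable {X 𝕜 E : Type*} [MeasurableSpace X] {μ : Measure X} [NormedAddCommGroup E] {p : ℝ≥0∞}
  [Fact (1 ≤ p)]

theorem coeFn_sub_smul [NontriviallyNormedField 𝕜] [NormedSpace 𝕜 E] {T : X → E →L[𝕜] E}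
    {H : Lp E p μ →L[𝕜] Lp E p μ} (hH : IsDirectIntegral T H) (c : 𝕜) (f : Lp E p μ) :
    ⇑(H f - c • f) =ᵐ[μ] fun x => T x (f x) - c • f x := by
  filter_upwards [Lp.coeFn_sub (H f) (c • f), Lp.coeFn_smul c f, hH f] with x hsub hsmul hHf
  rw [hsub, Pi.sub_apply, hsmul, Pi.smul_apply, hHf]

theorem spectrum_subset_closure [InnerProductSpace ℂ E] [CompleteSpace E] {T : X → E →L[ℂ] E}
    (hT : ∀ x, IsStarNormal (T x)) {H : Lp E 2 μ →L[ℂ] Lp E 2 μ} [IsStarNormal H]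
    (hH : IsDirectIntegral T H) : spectrum ℂ H ⊆ closure (⋃ x, spectrum ℂ (T x)) := by
  intro c hc
  refine Metric.mem_closure_iff.mpr fun ε hε => ?_
  by_contra! hfar
  have hfiber (x : X) (v : E) : ‖v‖ ≤ ε⁻¹ * ‖T x v - c • v‖ :=
    norm_le_inv_mul_norm_apply_sub_smul (T x) hε
      (fun z hz => hfar z (Set.mem_iUnion_of_mem x hz)) v
  obtain ⟨f, hf, hle⟩ := isApproxEigenvalue_of_mem_spectrum H hc (ε / 2) (half_pos hε)
  have hbound : ‖f‖ ≤ ε⁻¹ * ‖H f - c • f‖ := by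
    refine Lp.norm_le_mul_norm_of_ae_le_mul ?_
    filter_upwards [hH.coeFn_sub_smul c f] with x hx
    rw [hx]
    exact hfiber x (f x)
  rw [hf, le_inv_mul_iff₀ hε] at hbound
  linarith

variable [TopologicalSpace X] [OpensMeasurableSpace X] [IsLocallyFiniteMeasure μ]
  [μ.IsOpenPosMeasure]

theorem exists_approxEigenvector_of_mem_nhds [RCLike 𝕜] [NormedSpace 𝕜 E] {T : X → E →L[𝕜] E}
    {H : Lp E p μ →L[𝕜] Lp E p μ} (hH : IsDirectIntegral T H) {x₀ : X}
    (hT : ∀ v, ContinuousAt (fun x => T x v) x₀) {c : 𝕜} (hc : IsApproxEigenvalue (T x₀) c)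
    {ε : ℝ} (hε : 0 < ε) {U : Set X} (hU : U ∈ 𝓝 x₀) :
    ∃ f : Lp E p μ, ‖f‖ = 1 ∧ ‖H f - c • f‖ ≤ ε ∧ ∀ᵐ x ∂μ, x ∉ U → f x = 0 := by
  obtain ⟨v, hv, hle⟩ := hc (ε / 2) (half_pos hε)
  have hnear : ∀ᶠ x in 𝓝 x₀, ‖T x v - c • v‖ < ε :=
    ((hT v).sub continuousAt_const).norm.eventually_lt_const (hle.trans_lt (half_lt_self hε))
  obtain ⟨W, hx₀W, hW, hWfin⟩ := μ.exists_isOpen_measure_lt_top x₀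
  obtain ⟨s, hsub, hs, hx₀s⟩ := mem_nhds_iff.mp (inter_mem (inter_mem hU hnear) (hW.mem_nhds hx₀W))
  have hsfin : μ s ≠ ∞ := (measure_mono fun x hx => (hsub hx).2).trans_lt hWfin |>.ne
  set g : Lp E p μ := indicatorConstLp p hs.measurableSet hsfin v
  have hg_coe : g =ᵐ[μ] s.indicator fun _ => v := indicatorConstLp_coeFn
  have hg : g ≠ 0 := by
    have hspos : 0 < μ.real s := ENNReal.toReal_pos (hs.measure_ne_zero μ ⟨x₀, hx₀s⟩) hsfin
    rw [← norm_ne_zero_iff, norm_indicatorConstLp' (zero_lt_one.trans_le Fact.out).ne'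
      (hs.measure_ne_zero μ ⟨x₀, hx₀s⟩), hv, one_mul]
    positivity
  have hgle : ‖H g - c • g‖ ≤ ε * ‖g‖ := by
    refine Lp.norm_le_mul_norm_of_ae_le_mul ?_
    filter_upwards [hH.coeFn_sub_smul c g, hg_coe] with x hx hgx
    rw [hx, hgx]
    by_cases hxs : x ∈ s
    · rw [Set.indicator_of_mem hxs, hv, mul_one]
      exact (hsub hxs).1.2.le
    · simp [Set.indicator_of_notMem hxs]
  refine ⟨(‖g‖⁻¹ : 𝕜) • g, norm_smul_inv_norm hg, norm_apply_sub_smul_normalize_le hg hgle, ?_⟩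
  filter_upwards [Lp.coeFn_smul (‖g‖⁻¹ : 𝕜) g, hg_coe] with x hx hgx hxU
  rw [hx, Pi.smul_apply, hgx, Set.indicator_of_notMem fun hxs => hxU (hsub hxs).1.1, smul_zero]

theorem isApproxEigenvalue [RCLike 𝕜] [NormedSpace 𝕜 E] {T : X → E →L[𝕜] E}
    {H : Lp E p μ →L[𝕜] Lp E p μ} (hH : IsDirectIntegral T H) {x₀ : X}
    (hT : ∀ v, ContinuousAt (fun x => T x v) x₀) {c : 𝕜} (hc : IsApproxEigenvalue (T x₀) c) :
    IsApproxEigenvalue H c := by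
  intro ε hε
  obtain ⟨f, hf, hle, -⟩ := hH.exists_approxEigenvector_of_mem_nhds hT hc hε univ_mem
  exact ⟨f, hf, hle⟩

theorem exists_isWeylSequence [μ.OuterRegular] [RCLike 𝕜] [InnerProductSpace 𝕜 E]
    [CompleteSpace E] {T : X → E →L[𝕜] E} {H : Lp E 2 μ →L[𝕜] Lp E 2 μ}
    (hH : IsDirectIntegral T H) {x₀ : X} (hT : ∀ v, ContinuousAt (fun x => T x v) x₀)
    (hμ : μ {x₀} = 0) {c : 𝕜} (hc : IsApproxEigenvalue (T x₀) c) :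
    ∃ f, IsWeylSequence H c f := by
  have hexists (n : ℕ) : ∃ U, IsOpen U ∧ x₀ ∈ U ∧ μ U < (n + 1 : ℝ≥0∞)⁻¹ := by
    obtain ⟨U, hx₀U, hU, hlt⟩ := Set.exists_isOpen_lt_of_lt (μ := μ) {x₀} (n + 1 : ℝ≥0∞)⁻¹
      (by simp [hμ])
    exact ⟨U, hU, hx₀U rfl, hlt⟩
  choose U hU hx₀U hμU using hexists
  choose f hf hle hsupp using fun n : ℕ =>
    hH.exists_approxEigenvector_of_mem_nhds hT hc (Nat.one_div_pos_of_nat (n := n))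
      ((hU n).mem_nhds (hx₀U n))
  have hμU_zero : Tendsto (fun n => μ (U n)) atTop (𝓝 0) :=
    tendsto_of_tendsto_of_tendsto_of_le_of_le tendsto_const_nhds
      (by exact_mod_cast (tendsto_add_atTop_iff_nat 1).mpr ENNReal.tendsto_inv_nat_nhds_zero)
      (fun _ => zero_le) fun n => (hμU n).le
  refine ⟨f, hf, squeeze_zero_norm hle tendsto_one_div_add_atTop_nhds_zero_nat, fun φ => ?_⟩
  simpa only [InnerProductSpace.toDual_symm_apply] using
    tendsto_inner_zero_of_tendsto_measure_zero (𝕜 := 𝕜) (fun n => (hf n).le)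
      (fun n => (hU n).measurableSet) hμU_zero hsupp ((InnerProductSpace.toDual 𝕜 _).symm φ)

end IsDirectIntegral

end DirectIntegral

theorem directIntegral_spectrum_general {X : Type*} [TopologicalSpace X] [MeasurableSpace X]
    [OpensMeasurableSpace X] (μ : Measure X) [IsLocallyFiniteMeasure μ] [μ.IsOpenPosMeasure]
    [μ.OuterRegular] {𝓗 : Type*} [NormedAddCommGroup 𝓗] [InnerProductSpace ℂ 𝓗]
    [CompleteSpace 𝓗] (T : X → 𝓗 →L[ℂ] 𝓗) (hTcont : ∀ v, Continuous fun x => T x v)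
    (hTnormal : ∀ x, IsStarNormal (T x)) (H : Lp 𝓗 2 μ →L[ℂ] Lp 𝓗 2 μ) (hHnormal : IsStarNormal H)
    (hH : IsDirectIntegral T H) :
    spectrum ℂ H = closure (⋃ x : X, spectrum ℂ (T x)) ∧
      ∀ (lam : ℂ) (x₀ : X), lam ∈ spectrum ℂ (T x₀) → μ {x₀} = 0 → lam ∈ essSpectrum H := by
  have happrox {c : ℂ} {x : X} (hc : c ∈ spectrum ℂ (T x)) : IsApproxEigenvalue (T x) c :=
    isApproxEigenvalue_of_mem_spectrum (T x) hc
  refine ⟨(hH.spectrum_subset_closure hTnormal).antisymm ?_, fun lam x₀ hlam hμ => ?_⟩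
  · refine closure_subset_spectrum_of_isApproxEigenvalue fun c hc => ?_
    obtain ⟨x, hx⟩ := Set.mem_iUnion.mp hc
    exact hH.isApproxEigenvalue (fun v => (hTcont v).continuousAt) (happrox hx)
  · obtain ⟨f, hf⟩ :=
      hH.exists_isWeylSequence (fun v => (hTcont v).continuousAt) hμ (happrox hlam)
    exact hf.mem_essSpectrum

/-- for a decomposable self-adjoint operator `H = ∫⊕_X H(x) dμ` with
norm-continuous uniformly bounded self-adjoint fibers over a connected compact
metric measure space with `μ` of full support, `σ(H) = closure ⋃_x σ(H(x))`;
moreover any `λ ∈ σ(H(x₀))` with `μ({x₀}) = 0` lies in `σ_ess(H)`. -/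
theorem directIntegral_spectrum {X : Type*} [MetricSpace X] [CompactSpace X]
    [ConnectedSpace X] [MeasurableSpace X] [BorelSpace X]
    (μ : Measure X) [IsFiniteMeasure μ]
    (hfull : ∀ U : Set X, IsOpen U → U.Nonempty → 0 < μ U)
    {𝓗 : Type*} [NormedAddCommGroup 𝓗] [InnerProductSpace ℂ 𝓗] [CompleteSpace 𝓗]
    (T : X → 𝓗 →L[ℂ] 𝓗) (hTcont : Continuous T)
    (hTsa : ∀ x, IsSelfAdjoint (T x)) (hTbdd : ∃ M, ∀ x, ‖T x‖ ≤ M)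
    (H : Lp 𝓗 2 μ →L[ℂ] Lp 𝓗 2 μ) (hHsa : IsSelfAdjoint H)
    (hHfib : ∀ f : Lp 𝓗 2 μ, (H f : X → 𝓗) =ᵐ[μ] fun x => T x (f x)) :
    spectrum ℂ H = closure (⋃ x : X, spectrum ℂ (T x)) ∧
      ∀ (lam : ℂ) (x₀ : X), lam ∈ spectrum ℂ (T x₀) → μ {x₀} = 0 →
        lam ∈ essSpectrum H := by
  have : μ.IsOpenPosMeasure := ⟨fun U hU hne => (hfull U hU hne).ne'⟩
  exact directIntegral_spectrum_general μ T (fun v => hTcont.clm_apply continuous_const)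
    (fun x => (hTsa x).isStarNormal) H hHsa.isStarNormal hHfib
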